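/- Let S ⊆ ℝ^n be nonempty, convex and compact, φ : ℝ^n → ℝ differentiable with ℓ-Lipschitz continuous gradient, A : ℝ^n → ℝ^s and K : ℝ^n → ℝ^p linear maps, σ_A := ‖A‖². Let g : ℝ^s → ℝ ∪ {+∞} and f : ℝ^p → ℝ ∪ {+∞} be proper, convex and lower semicontinuous, and let G = g* and H = f* be their Fenchel conjugates. Assume A(S) is contained in the relative interior of dom g, and that there exists F̲ ∈ ℝ such that f(K x) + F̲ ≤ g(A x) + φ(x) for all x ∈ S (inequality in ℝ ∪ {+∞}). Let γ > 0, 0 < α < γ/2, μ > 0, and suppose the parameter sequences satisfy: α_k → α, α + γ ≥ α_0 ≥ α_k ≥ α_{k+1} > α, (α_k − α_{k+1})/((α_{k+1} − α)(α_k − α)) ≤ 1/γ and (α_k − α)(α_{k+2} − α) ≥ (α_{k+1} − α)² for all k ≥ 0; 0 < β̲ ≤ β_k ≤ β̄ < +∞; δ_k = α/α_k; and ρ_k = ℓ/2 + 3σ_Aγ/(2(α_k − α)²) + μ. Let x^0 ∈ S, y^0 ∈ ℝ^p, z^0 ∈ ℝ^s and for all k ≥ 0 define: x^{k+1} as the point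 of S minimizing the distance to x^k − (1/ρ_k)(A*z^k − K*y^k + ∇φ(x^k)); y^{k+1} as the unique minimizer over ℝ^p of y ↦ H(y) − ⟨K x^{k+1}, y⟩ + (β_k/2)‖y − y^k‖²; and z^{k+1} as the unique minimizer over ℝ^s of z ↦ G(z) − ⟨A x^{k+1}, z⟩ + (α_k/2)‖z − δ_k z^k‖². Define Ψ and ψ_k (k ≥ 2) as follows: Ψ(x, y, z) = ⟨z, A x⟩ − G(z) + φ(x) − ⟨K x, y⟩ + H(y), ψ_k = Ψ(x^k, y^k, z^k) + α(1/2 + 2α/(α_k − α))‖z^k − z^{k−1}‖² − ((1/2)(α_{k−2} − α) − 2α(α_{k−1} − α_{k−2})/(α_{k−1} − α))‖z^k‖². If the sequence (z^k)_{k≥0} is bounded, then: (i) (ψ_k)_{k≥2} is bounded from below; (ii) (ψ_k)_{k≥2} converges to a real limit; (iii) ‖x^k − x^{k+1}‖ → 0, ‖y^k − y^{k+1}‖ → 0 and ‖z^k − z^{k+1}‖ → 0 as k → +∞. -/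

import Mathlib

open Filter RealInnerProductSpace

/-!
The saddle function `Ψ(x, y, z) = ⟨z, A x⟩ - G z + φ x - ⟨K x, y⟩ + H y` decreases in the
projected gradient step for `x` and in the proximal step for `y`. It may increase in the
`z`-step, but by no more than the optimality condition of the previous `z`-step allows. Adding a
suitable multiple of the monotonicity of `∂G` between successive iterates turns this bound into
a telescoping combination of `‖z k - z (k - 1)‖ ^ 2` and `‖z k‖ ^ 2`, up to a coupling term
`‖A‖ ^ 2 * ‖x k - x (k + 1)‖ ^ 2` that the size of `ρ k` absorbs. If `‖z k‖ ≤ C` and `c k` is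
the coefficient of `-‖z k‖ ^ 2` in `ψ k`, then `c` is antitone, so `ψ k + C ^ 2 * c k` loses a
fixed positive combination of the squared velocities at every step.

It is bounded below: the `x, y` part of `Ψ` by the Fenchel–Young inequality, and
`⟨z, A x⟩ - G z` because optimality of `z (k + 1)` compares it with a fixed point of the domain
of `G`.
-/

section Epigraph

/-- The epigraph of an extended-real-valued function, cut down to real heights. Convexity of `g` is
expressed as convexity of this set: `EReal` is not a real module, so `ConvexOn` is unavailable. -/
def realEpigraph {E : Type*} (g : E → EReal) : Set (E × ℝ) := {q | g q.1 ≤ q.2}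

/-- An extended-real-valued function is proper if it omits `-∞` and is somewhere finite. -/
structure IsProper {E : Type*} (g : E → EReal) : Prop where
  ne_bot : ∀ v, g v ≠ ⊥
  exists_ne_top : ∃ v, g v ≠ ⊤

lemma convex_realEpigraph {E : Type*} [AddCommGroup E] [Module ℝ E] {g : E → EReal}
    (hg : ∀ v w : E, ∀ a b : ℝ, 0 ≤ a → 0 ≤ b → a + b = 1 →
      g (a • v + b • w) ≤ (a : EReal) * g v + (b : EReal) * g w) :
    Convex ℝ (realEpigraph g) := by
  rintro ⟨v, r⟩ (hv : g v ≤ r) ⟨w, t⟩ (hw : g w ≤ t) a b ha hb hab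
  change g (a • v + b • w) ≤ ((a * r + b * t : ℝ) : EReal)
  refine (hg v w a b ha hb hab).trans ?_
  push_cast
  gcongr

lemma isClosed_realEpigraph {E : Type*} [TopologicalSpace E] {g : E → EReal}
    (hg : LowerSemicontinuous g) : IsClosed (realEpigraph g) :=
  hg.isClosed_epigraph.preimage (continuous_id.prodMap continuous_coe_real_ereal)

lemma convexOn_toReal {E : Type*} [AddCommGroup E] [Module ℝ E] {g : E → EReal}
    (hg : Convex ℝ (realEpigraph g)) (hbot : ∀ v, g v ≠ ⊥) :
    ConvexOn ℝ {v | g v ≠ ⊤} fun v => (g v).toReal := by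
  have jensen : ∀ ⦃v⦄, g v ≠ ⊤ → ∀ ⦃w⦄, g w ≠ ⊤ → ∀ ⦃a b : ℝ⦄, 0 ≤ a → 0 ≤ b → a + b = 1 →
      g (a • v + b • w) ≤ ((a * (g v).toReal + b * (g w).toReal : ℝ) : EReal) :=
    fun v hv w hw a b ha hb hab =>
      hg (x := (v, (g v).toReal)) (EReal.le_coe_toReal hv) (y := (w, (g w).toReal))
        (EReal.le_coe_toReal hw) ha hb hab
  refine ⟨fun v hv w hw a b ha hb hab => ?_, fun v hv w hw a b ha hb hab => ?_⟩
  · exact ((jensen hv hw ha hb hab).trans_lt (EReal.coe_lt_top _)).ne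
  · exact EReal.toReal_le_toReal (jensen hv hw ha hb hab) (hbot _) (EReal.coe_ne_top _)

lemma continuousOn_intrinsicInterior_of_convexOn {E : Type*} [NormedAddCommGroup E]
    [NormedSpace ℝ E] [FiniteDimensional ℝ E] {s : Set E} {f : E → ℝ} (hf : ConvexOn ℝ s f) :
    ContinuousOn f (intrinsicInterior ℝ s) := by
  rcases s.eq_empty_or_nonempty with rfl | ⟨x, hx⟩
  · simp
  let x₀ : affineSpan ℝ s := ⟨x, subset_affineSpan ℝ s hx⟩
  have : Nonempty (affineSpan ℝ s) := ⟨x₀⟩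
  let e := AffineIsometryEquiv.vaddConst ℝ x₀
  let ι := (affineSpan ℝ s).subtype.comp e.toAffineEquiv.toAffineMap
  have hι : Topology.IsInducing ι :=
    Topology.IsInducing.subtypeVal.comp e.toHomeomorph.isInducing
  have himage : intrinsicInterior ℝ s = ι '' interior (ι ⁻¹' s) := by
    have hpre : ι ⁻¹' s = e.toHomeomorph ⁻¹' (Subtype.val ⁻¹' s) := rfl
    rw [hpre, ← e.toHomeomorph.preimage_interior]
    change _ = (Subtype.val ∘ e.toHomeomorph) '' _
    rw [Set.image_comp, Set.image_preimage_eq _ e.toHomeomorph.surjective]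
    rfl
  rw [himage, hι.continuousOn_image_iff]
  exact (hf.comp_affineMap ι).continuousOn_interior

lemma exists_forall_le_of_isCompact_subset_intrinsicInterior {E : Type*} [NormedAddCommGroup E]
    [NormedSpace ℝ E] [FiniteDimensional ℝ E] {g : E → EReal} (hg : Convex ℝ (realEpigraph g))
    (hbot : ∀ v, g v ≠ ⊥) {C : Set E} (hC : IsCompact C)
    (hsub : C ⊆ intrinsicInterior ℝ {v | g v ≠ ⊤}) :
    ∃ M : ℝ, ∀ v ∈ C, g v ≤ M := by
  obtain ⟨M, hM⟩ := hC.bddAbove_image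
    ((continuousOn_intrinsicInterior_of_convexOn (convexOn_toReal hg hbot)).mono hsub)
  refine ⟨M, fun v hv => ?_⟩
  exact (EReal.le_coe_toReal (intrinsicInterior_subset (hsub hv))).trans
    (EReal.coe_le_coe_iff.2 (hM (Set.mem_image_of_mem _ hv)))

lemma exists_affine_minorant {E : Type*} [NormedAddCommGroup E] [NormedSpace ℝ E] {g : E → EReal}
    (hg : IsProper g) (hconv : Convex ℝ (realEpigraph g)) (hclosed : IsClosed (realEpigraph g)) :
    ∃ (L : StrongDual ℝ E) (c : ℝ), ∀ q ∈ realEpigraph g, L q.1 - q.2 ≤ c := by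
  obtain ⟨v₀, hv₀⟩ := hg.exists_ne_top
  have hr₀ := EReal.coe_toReal hv₀ (hg.ne_bot v₀)
  set r₀ := (g v₀).toReal
  have hbelow : (v₀, r₀ - 1) ∉ realEpigraph g := by
    simp only [realEpigraph, Set.mem_ofPred_eq, ← hr₀, EReal.coe_le_coe_iff]
    linarith
  obtain ⟨F, c, hc, hF⟩ := geometric_hahn_banach_point_closed hconv hclosed hbelow
  have hF_apply : ∀ (v : E) (r : ℝ), F (v, r) = F (v, 0) + r * F (0, 1) := fun v r => by
    rw [← smul_eq_mul, ← map_smul, ← map_add]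
    simp
  have h₀ := hF (v₀, r₀) hr₀.ge
  rw [hF_apply] at hc h₀
  have hslope : 0 < F (0, 1) := by linarith
  refine ⟨-(F (0, 1))⁻¹ • F.comp (.inl ℝ E ℝ), -(F (0, 1))⁻¹ * c, fun q hq => ?_⟩
  have h := hF q hq
  rw [← Prod.mk.eta (p := q), hF_apply] at h
  change -(F (0, 1))⁻¹ * F (q.1, 0) - q.2 ≤ _
  field_simp
  linarith

end Epigraph

section FenchelConjugate

variable {E : Type*} [NormedAddCommGroup E] [InnerProductSpace ℝ E] {g : E → EReal}

/-- The Fenchel conjugate `g*` of an extended-real-valued function on a real inner product space. -/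
noncomputable def fenchelConjugate (g : E → EReal) (w : E) : EReal :=
  ⨆ v, ((⟪w, v⟫ : ℝ) : EReal) - g v

lemma fenchelConjugate_le_coe_iff {w : E} {c : ℝ} :
    fenchelConjugate g w ≤ c ↔ ∀ q ∈ realEpigraph g, ⟪w, q.1⟫ - q.2 ≤ c := by
  simp only [fenchelConjugate, iSup_le_iff, Prod.forall]
  refine forall_congr' fun v => ⟨fun h r (hr : g v ≤ r) => ?_, fun h => ?_⟩
  · exact_mod_cast (EReal.sub_le_sub le_rfl hr).trans h
  · rcases eq_or_ne (g v) ⊤ with htop | htop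
    · simp [htop]
    rcases eq_or_ne (g v) ⊥ with hbot | hbot
    · have := h (⟪w, v⟫ - c - 1) (hbot.trans_le bot_le)
      linarith
    · rw [← EReal.coe_toReal htop hbot]
      exact_mod_cast h _ (EReal.le_coe_toReal htop)

lemma convex_realEpigraph_fenchelConjugate : Convex ℝ (realEpigraph (fenchelConjugate g)) := by
  rintro ⟨v, r⟩ hv ⟨w, t⟩ hw a b ha hb hab
  refine fenchelConjugate_le_coe_iff.2 fun q hq => ?_
  have hvq := fenchelConjugate_le_coe_iff.1 hv q hq
  have hwq := fenchelConjugate_le_coe_iff.1 hw q hq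
  simp only [Prod.smul_fst, Prod.smul_snd, Prod.fst_add, Prod.snd_add, inner_add_left,
    real_inner_smul_left, smul_eq_mul]
  obtain rfl : a = 1 - b := by linarith
  nlinarith [mul_le_mul_of_nonneg_left hvq ha, mul_le_mul_of_nonneg_left hwq hb]

lemma IsProper.fenchelConjugate [CompleteSpace E] (hg : IsProper g)
    (hconv : Convex ℝ (realEpigraph g)) (hclosed : IsClosed (realEpigraph g)) :
    IsProper (fenchelConjugate g) where
  ne_bot w h := by
    obtain ⟨v, hv⟩ := hg.exists_ne_top
    have := fenchelConjugate_le_coe_iff (c := ⟪w, v⟫ - (g v).toReal - 1).1 (h.trans_le bot_le)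
      (v, (g v).toReal) (EReal.le_coe_toReal hv)
    linarith
  exists_ne_top := by
    obtain ⟨L, c, hL⟩ := exists_affine_minorant hg hconv hclosed
    refine ⟨(InnerProductSpace.toDual ℝ E).symm L, ne_top_of_le_ne_top (EReal.coe_ne_top c) ?_⟩
    rw [fenchelConjugate_le_coe_iff]
    simpa using hL

lemma coe_inner_sub_le_fenchelConjugate {v : E} {r : ℝ} (hv : g v ≤ r) (w : E) :
    ((⟪w, v⟫ - r : ℝ) : EReal) ≤ fenchelConjugate g w := by
  push_cast
  exact (EReal.sub_le_sub le_rfl hv).trans (le_iSup (fun v => ((⟪w, v⟫ : ℝ) : EReal) - g v) v)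

lemma coe_sub_le_add_fenchelConjugate {v : E} {m M t : ℝ} {b : EReal}
    (h : g v + m ≤ b + t) (hb : b ≤ M) (w : E) :
    ((m - M : ℝ) : EReal) ≤ ((t - ⟪v, w⟫ : ℝ) : EReal) + fenchelConjugate g w := by
  have hv : g v ≤ ((M + t - m : ℝ) : EReal) := by
    push_cast
    rw [EReal.le_sub_iff_add_le (.inl (EReal.coe_ne_bot _)) (.inl (EReal.coe_ne_top _))]
    exact h.trans (by gcongr)
  refine le_trans (le_of_eq ?_) (add_le_add_right (coe_inner_sub_le_fenchelConjugate hv w) _)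
  norm_cast
  rw [real_inner_comm]
  ring

end FenchelConjugate

section FirstOrder

variable {E : Type*} [NormedAddCommGroup E] [InnerProductSpace ℝ E]

lemma hasFDerivAt_snd_sub_inner_add_norm_sub_sq (u q : E) (α : ℝ) (p : E × ℝ) :
    HasFDerivAt (fun p : E × ℝ => p.2 - ⟪u, p.1⟫ + α / 2 * ‖p.1 - q‖ ^ 2)
      (.snd ℝ E ℝ - (innerSL ℝ (u - α • (p.1 - q))).comp (.fst ℝ E ℝ)) p := by
  have hsnd : HasFDerivAt (fun p : E × ℝ => p.2) (.snd ℝ E ℝ) p := hasFDerivAt_snd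
  have hfst : HasFDerivAt (fun p : E × ℝ => p.1) (.fst ℝ E ℝ) p := hasFDerivAt_fst
  have hinner := (innerSL ℝ u).hasFDerivAt.comp p hfst
  have hsq := (hfst.sub_const q).norm_sq.const_mul (α / 2)
  refine ((hsnd.sub hinner).add hsq).congr_fderiv (ContinuousLinearMap.ext fun d => ?_)
  change d.2 - ⟪u, d.1⟫ + α / 2 * (2 • ⟪p.1 - q, d.1⟫) = d.2 - ⟪u - α • (p.1 - q), d.1⟫
  rw [inner_sub_left u, real_inner_smul_left, nsmul_eq_mul]
  push_cast
  ring

-- The prox objective is minimized over the convex epigraph of `G`, where it is smooth.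
lemma toReal_add_inner_le_of_prox {G : E → EReal} (hG : Convex ℝ (realEpigraph G)) {u q z : E}
    {α : ℝ} (hztop : G z ≠ ⊤) (hzbot : G z ≠ ⊥)
    (hmin : ∀ w, G z + ((-⟪u, z⟫ + α / 2 * ‖z - q‖ ^ 2 : ℝ) : EReal) ≤
      G w + ((-⟪u, w⟫ + α / 2 * ‖w - q‖ ^ 2 : ℝ) : EReal))
    {w : E} {b : ℝ} (hw : G w ≤ b) :
    (G z).toReal + ⟪u - α • (z - q), w - z⟫ ≤ b := by
  have hGz : ((G z).toReal : EReal) = G z := EReal.coe_toReal hztop hzbot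
  have hJmin : IsMinOn (fun p : E × ℝ => p.2 - ⟪u, p.1⟫ + α / 2 * ‖p.1 - q‖ ^ 2)
      (realEpigraph G) (z, (G z).toReal) := fun p hp => by
    have h := (hmin p.1).trans (add_le_add_left hp _)
    rw [← hGz] at h
    have h' : (G z).toReal + (-⟪u, z⟫ + α / 2 * ‖z - q‖ ^ 2) ≤
        p.2 + (-⟪u, p.1⟫ + α / 2 * ‖p.1 - q‖ ^ 2) := by exact_mod_cast h
    change (G z).toReal - _ + _ ≤ p.2 - _ + _
    linarith
  have hcone : (w, b) - (z, (G z).toReal) ∈ posTangentConeAt (realEpigraph G) (z, (G z).toReal) :=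
    sub_mem_posTangentConeAt_of_segment_subset (hG.segment_subset hGz.ge hw)
  have hnonneg := hJmin.localize.hasFDerivWithinAt_nonneg
    (hasFDerivAt_snd_sub_inner_add_norm_sub_sq u q α _).hasFDerivWithinAt hcone
  change 0 ≤ (b - (G z).toReal) - ⟪u - α • (z - q), w - z⟫ at hnonneg
  linarith

lemma inner_sub_le_zero_of_forall_norm_sub_le {S : Set E} (hS : Convex ℝ S) {p v w : E}
    (hv : v ∈ S) (hmin : ∀ w ∈ S, ‖v - p‖ ≤ ‖w - p‖) (hw : w ∈ S) : ⟪p - v, w - v⟫ ≤ 0 := by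
  refine (norm_eq_iInf_iff_real_inner_le_zero hS hv).1 ?_ w hw
  have : Nonempty S := ⟨⟨v, hv⟩⟩
  refine le_antisymm (le_ciInf fun w => ?_) (ciInf_le ⟨0, ?_⟩ (⟨v, hv⟩ : S))
  · simpa only [norm_sub_rev p] using hmin w w.2
  · rintro _ ⟨w, rfl⟩
    exact norm_nonneg _

lemma le_quadratic_of_lipschitz_gradient [CompleteSpace E] {S : Set E} (hS : Convex ℝ S)
    {φ : E → ℝ} {gφ : E → E} {ℓ : ℝ} (hφ : ∀ u ∈ S, HasGradientWithinAt φ (gφ u) S u)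
    (hlip : ∀ u ∈ S, ∀ v ∈ S, ‖gφ u - gφ v‖ ≤ ℓ * ‖u - v‖) {u v : E} (hu : u ∈ S) (hv : v ∈ S) :
    φ v ≤ φ u + ⟪gφ u, v - u⟫ + ℓ / 2 * ‖v - u‖ ^ 2 := by
  have hline : ∀ t ∈ Set.Icc (0 : ℝ) 1, u + t • (v - u) ∈ S := fun t ht =>
    hS.add_smul_sub_mem hu hv ht
  have hderiv : ∀ t ∈ Set.Icc (0 : ℝ) 1, HasDerivWithinAt
      (fun t : ℝ => φ (u + t • (v - u)) - t * ⟪gφ u, v - u⟫ - ℓ / 2 * ‖v - u‖ ^ 2 * t ^ 2)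
      (⟪gφ (u + t • (v - u)) - gφ u, v - u⟫ - ℓ * ‖v - u‖ ^ 2 * t) (Set.Icc 0 1) t := by
    intro t ht
    have hsegment : HasDerivWithinAt (fun t : ℝ => u + t • (v - u)) (v - u) (Set.Icc 0 1) t := by
      simpa using ((hasDerivWithinAt_id t _).smul_const (v - u)).const_add u
    have h₁ := (hφ _ (hline t ht)).hasFDerivWithinAt.comp_hasDerivWithinAt t hsegment hline
    have h₂ := (hasDerivWithinAt_id t (Set.Icc 0 1)).mul_const ⟪gφ u, v - u⟫
    have h₃ := ((hasDerivAt_pow 2 t).hasDerivWithinAt (s := Set.Icc 0 1)).const_mul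
      (ℓ / 2 * ‖v - u‖ ^ 2)
    refine ((h₁.sub h₂).sub h₃).congr_deriv ?_
    rw [InnerProductSpace.toDual_apply_apply, inner_sub_left]
    push_cast
    ring
  have hderiv_nonpos : ∀ t ∈ Set.Icc (0 : ℝ) 1,
      ⟪gφ (u + t • (v - u)) - gφ u, v - u⟫ - ℓ * ‖v - u‖ ^ 2 * t ≤ 0 := fun t ht => by
    have h := hlip _ (hline t ht) _ hu
    rw [add_sub_cancel_left, norm_smul, Real.norm_of_nonneg ht.1] at h
    calc _ ≤ ‖gφ (u + t • (v - u)) - gφ u‖ * ‖v - u‖ - ℓ * ‖v - u‖ ^ 2 * t := by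
          gcongr
          exact real_inner_le_norm _ _
      _ ≤ ℓ * (t * ‖v - u‖) * ‖v - u‖ - ℓ * ‖v - u‖ ^ 2 * t := by gcongr
      _ = 0 := by ring
  have hanti := antitoneOn_of_hasDerivWithinAt_nonpos (convex_Icc (0 : ℝ) 1)
    (fun t ht => (hderiv t ht).continuousWithinAt)
    (fun t ht => (hderiv t (interior_subset ht)).mono interior_subset)
    (fun t ht => hderiv_nonpos t (interior_subset ht))
  have h := hanti (Set.left_mem_Icc.2 zero_le_one) (Set.right_mem_Icc.2 zero_le_one) zero_le_one
  simp only [one_smul, add_sub_cancel, one_mul, one_pow, mul_one, zero_smul, add_zero, zero_mul,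
    sub_zero, ne_eq, OfNat.ofNat_ne_zero, not_false_eq_true, zero_pow, mul_zero] at h
  linarith

lemma sufficient_decrease_of_projected_gradient [CompleteSpace E] {S : Set E} (hS : Convex ℝ S)
    {φ : E → ℝ} {gφ : E → E} {ℓ : ℝ} (hφ : ∀ u ∈ S, HasGradientWithinAt φ (gφ u) S u)
    (hlip : ∀ u ∈ S, ∀ v ∈ S, ‖gφ u - gφ v‖ ≤ ℓ * ‖u - v‖) {τ : ℝ} (hτ : 0 < τ) {c x x' : E}
    (hx : x ∈ S) (hx' : x' ∈ S)
    (hmin : ∀ v ∈ S, ‖x' - (x - (ℓ / 2 + τ)⁻¹ • (c + gφ x))‖ ≤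
      ‖v - (x - (ℓ / 2 + τ)⁻¹ • (c + gφ x))‖) :
    φ x' + ⟪c, x'⟫ + τ * ‖x - x'‖ ^ 2 ≤ φ x + ⟪c, x⟫ := by
  rcases eq_or_ne x' x with rfl | hne
  · simp
  have hℓ : 0 ≤ ℓ :=
    nonneg_of_mul_nonneg_left ((norm_nonneg _).trans (hlip x' hx' x hx))
      (norm_pos_iff.2 (sub_ne_zero.2 hne))
  have hρ : 0 < ℓ / 2 + τ := by positivity
  have hproj : ⟪c + gφ x, x' - x⟫ ≤ -(ℓ / 2 + τ) * ‖x' - x‖ ^ 2 := by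
    have h := inner_sub_le_zero_of_forall_norm_sub_le hS hx' hmin hx
    rw [← neg_sub x' x, inner_neg_right, sub_right_comm, ← neg_sub x' x, ← neg_add',
      inner_neg_left, neg_neg, inner_add_left, real_inner_smul_left, real_inner_self_eq_norm_sq,
      ← le_neg_iff_add_nonpos_left, inv_mul_le_iff₀ hρ] at h
    linarith
  have hdescent := le_quadratic_of_lipschitz_gradient hS hφ hlip hx hx'
  rw [inner_add_left, inner_sub_right c] at hproj
  rw [norm_sub_rev x]
  linarith

end FirstOrder

section Sequences

lemma tendsto_of_dissipation {e D : ℕ → ℝ} {m : ℝ} (hm : ∀ k, m ≤ e k) (hD : ∀ k, 0 ≤ D k)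
    (h : ∀ k, e (k + 1) + D k ≤ e k) :
    (∃ L, Tendsto e atTop (nhds L)) ∧ Tendsto D atTop (nhds 0) := by
  have hanti : Antitone e := antitone_nat_of_succ_le fun k => by linarith [h k, hD k]
  have hlim := tendsto_atTop_ciInf hanti ⟨m, by rintro _ ⟨k, rfl⟩; exact hm k⟩
  refine ⟨⟨_, hlim⟩, squeeze_zero hD (fun k => le_sub_iff_add_le'.2 (h k)) ?_⟩
  simpa using hlim.sub ((tendsto_add_atTop_iff_nat 1).2 hlim)

lemma tendsto_zero_of_mul_sq_le {c : ℝ} (hc : 0 < c) {u D : ℕ → ℝ} (hu : ∀ k, 0 ≤ u k)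
    (h : ∀ k, c * u k ^ 2 ≤ D k) (hD : Tendsto D atTop (nhds 0)) :
    Tendsto u atTop (nhds 0) := by
  have hsq : Tendsto (fun k => u k ^ 2) atTop (nhds 0) := by
    refine squeeze_zero (fun k => sq_nonneg _) (fun k => (le_inv_mul_iff₀ hc).2 (h k)) ?_
    simpa using hD.const_mul c⁻¹
  simpa [Real.sqrt_sq (hu _)] using hsq.sqrt

lemma tendsto_zero_of_add_mul_sq {a b c : ℝ} (ha : 0 < a) (hb : 0 < b) (hc : 0 < c)
    {u v w : ℕ → ℝ} (hu : ∀ k, 0 ≤ u k) (hv : ∀ k, 0 ≤ v k) (hw : ∀ k, 0 ≤ w k)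
    (h : Tendsto (fun k => a * u k ^ 2 + b * v k ^ 2 + c * w k ^ 2) atTop (nhds 0)) :
    Tendsto u atTop (nhds 0) ∧ Tendsto v atTop (nhds 0) ∧ Tendsto w atTop (nhds 0) := by
  refine ⟨tendsto_zero_of_mul_sq_le ha hu (fun k => ?_) h,
    tendsto_zero_of_mul_sq_le hb hv (fun k => ?_) h,
    tendsto_zero_of_mul_sq_le hc hw (fun k => ?_) h⟩
  all_goals nlinarith [mul_nonneg ha.le (sq_nonneg (u k)), mul_nonneg hb.le (sq_nonneg (v k)),
    mul_nonneg hc.le (sq_nonneg (w k))]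

end Sequences

section StepSize

/-- The adaptive regime of dual step sizes `α k ↓ αl`; the last two fields control how slowly the
excess `α k - αl` decays. -/
structure IsStepSize (αl γ : ℝ) (α : ℕ → ℝ) : Prop where
  pos : 0 < αl
  lt_half : αl < γ / 2
  zero_le : α 0 ≤ αl + γ
  succ_le : ∀ k, α (k + 1) ≤ α k
  lt : ∀ k, αl < α k
  div_le : ∀ k, (α k - α (k + 1)) / ((α (k + 1) - αl) * (α k - αl)) ≤ 1 / γ
  sq_le : ∀ k, (α (k + 1) - αl) ^ 2 ≤ (α k - αl) * (α (k + 2) - αl)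

/-- The coefficient of `-‖z (k + 2)‖ ^ 2` in the energy `ψ (k + 2)`. -/
noncomputable def energyWeight (αl : ℝ) (α : ℕ → ℝ) (k : ℕ) : ℝ :=
  1 / 2 * (α k - αl) + 2 * αl * ((α k - α (k + 1)) / (α (k + 1) - αl))

namespace IsStepSize

variable {αl γ : ℝ} {α : ℕ → ℝ}

lemma sub_pos (h : IsStepSize αl γ α) (k : ℕ) : 0 < α k - αl :=
  _root_.sub_pos.2 (h.lt k)

lemma antitone (h : IsStepSize αl γ α) : Antitone α :=
  antitone_nat_of_succ_le h.succ_le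

lemma sub_le (h : IsStepSize αl γ α) (k : ℕ) : α k - αl ≤ γ :=
  sub_le_iff_le_add'.2 ((h.antitone k.zero_le).trans h.zero_le)

lemma two_mul_sq_div_lt (h : IsStepSize αl γ α) : 2 * αl ^ 2 / γ < αl := by
  have hpos := h.pos
  have hhalf := h.lt_half
  rw [div_lt_iff₀ (by linarith)]
  nlinarith

lemma inv_sub_le (h : IsStepSize αl γ α) (k : ℕ) :
    (α (k + 1) - αl)⁻¹ ≤ (α k - αl)⁻¹ + γ⁻¹ := by
  rw [← sub_le_iff_le_add', inv_sub_inv (h.sub_pos _).ne' (h.sub_pos _).ne',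
    sub_sub_sub_cancel_right, inv_eq_one_div]
  exact h.div_le k

lemma energyWeight_nonneg (h : IsStepSize αl γ α) (k : ℕ) : 0 ≤ energyWeight αl α k := by
  have hpos := h.pos
  have hk := h.sub_pos k
  have hk' := h.sub_pos (k + 1)
  have hstep := sub_nonneg.2 (h.succ_le k)
  unfold energyWeight
  positivity

lemma energyWeight_antitone (h : IsStepSize αl γ α) : Antitone (energyWeight αl α) := by
  refine antitone_nat_of_succ_le fun k => ?_
  have hpos := h.pos
  have hratio : (α (k + 1) - α (k + 2)) / (α (k + 2) - αl) ≤
      (α k - α (k + 1)) / (α (k + 1) - αl) := by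
    rw [div_le_div_iff₀ (h.sub_pos _) (h.sub_pos _)]
    linarith [h.sq_le k]
  unfold energyWeight
  gcongr
  exact h.succ_le k

lemma exists_tendsto_energyWeight (h : IsStepSize αl γ α) :
    ∃ L, Tendsto (energyWeight αl α) atTop (nhds L) :=
  ⟨_, tendsto_atTop_ciInf h.energyWeight_antitone
    ⟨0, by rintro _ ⟨k, rfl⟩; exact h.energyWeight_nonneg k⟩⟩

end IsStepSize

end StepSize

section DualStep

variable {Z : Type*} [NormedAddCommGroup Z] [InnerProductSpace ℝ Z] {z₀ z₁ z₂ u₁ u₂ : Z}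
  {α γ a₀ a₁ a₂ G₁ G₂ N d : ℝ}

lemma inner_sub_le_of_subgradient (h₁ : G₁ + ⟪u₁ - ((α + a₀) • z₁ - α • z₀), z₂ - z₁⟫ ≤ G₂) :
    ⟪z₂, u₂⟫ - G₂ ≤ ⟪z₁, u₂⟫ - G₁ +
      (⟪u₂ - u₁, z₂ - z₁⟫ + a₀ * ⟪z₁, z₂ - z₁⟫ + α * ⟪z₁ - z₀, z₂ - z₁⟫) := by
  have hsplit : u₁ - ((α + a₀) • z₁ - α • z₀) = u₂ - (u₂ - u₁) - a₀ • z₁ - α • (z₁ - z₀) := by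
    module
  rw [hsplit, inner_sub_left, inner_sub_left, inner_sub_left u₂, real_inner_smul_left,
    real_inner_smul_left, inner_sub_right u₂, real_inner_comm, real_inner_comm z₁] at h₁
  linarith

lemma norm_sq_le_of_subgradients (h₁ : G₁ + ⟪u₁ - ((α + a₀) • z₁ - α • z₀), z₂ - z₁⟫ ≤ G₂)
    (h₂ : G₂ + ⟪u₂ - ((α + a₁) • z₂ - α • z₁), z₁ - z₂⟫ ≤ G₁) :
    (α + a₁) * ‖z₂ - z₁‖ ^ 2 ≤
      ⟪u₂ - u₁, z₂ - z₁⟫ + (a₀ - a₁) * ⟪z₁, z₂ - z₁⟫ + α * ⟪z₁ - z₀, z₂ - z₁⟫ := by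
  have hmono : 0 ≤ ⟪(u₂ - ((α + a₁) • z₂ - α • z₁)) - (u₁ - ((α + a₀) • z₁ - α • z₀)),
      z₂ - z₁⟫ := by
    rw [← neg_sub z₂, inner_neg_right] at h₂
    rw [inner_sub_left]
    linarith
  have hsplit : (u₂ - ((α + a₁) • z₂ - α • z₁)) - (u₁ - ((α + a₀) • z₁ - α • z₀)) =
      (u₂ - u₁) + (a₀ - a₁) • z₁ + α • (z₁ - z₀) - (α + a₁) • (z₂ - z₁) := by
    module
  rw [hsplit, inner_sub_left, inner_add_left, inner_add_left, real_inner_smul_left,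
    real_inner_smul_left, real_inner_smul_left, real_inner_self_eq_norm_sq] at hmono
  linarith

lemma coupling_le (hα : 0 ≤ α) (ha₁ : 0 < a₁) (hγ : 4 * α + a₁ ≤ 3 * γ) (t : ℝ) :
    (1 + 4 * α / a₁) * (N * d * t) ≤
      3 * N ^ 2 * γ / (2 * a₁ ^ 2) * d ^ 2 + (2 * α + a₁ / 2) * t ^ 2 :=
  calc (1 + 4 * α / a₁) * (N * d * t) = (2 * α + a₁ / 2) * (2 * (N * d / a₁) * t) := by
        field_simp
        ring
    _ ≤ (2 * α + a₁ / 2) * ((N * d / a₁) ^ 2 + t ^ 2) := by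
        gcongr
        exact two_mul_le_add_sq _ _
    _ = (2 * α + a₁ / 2) * (N * d / a₁) ^ 2 + (2 * α + a₁ / 2) * t ^ 2 := mul_add _ _ _
    _ ≤ 3 * γ / 2 * (N * d / a₁) ^ 2 + (2 * α + a₁ / 2) * t ^ 2 := by
        gcongr
        linarith
    _ = _ := by
        congr 1
        field_simp

lemma dual_energy_step (hα : 0 < α) (hαγ : α < γ / 2) (ha₁ : 0 < a₁) (ha₁₀ : a₁ ≤ a₀)
    (ha₁γ : a₁ ≤ γ) (ha₂ : a₂⁻¹ ≤ a₁⁻¹ + γ⁻¹)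
    (h₁ : G₁ + ⟪u₁ - ((α + a₀) • z₁ - α • z₀), z₂ - z₁⟫ ≤ G₂)
    (h₂ : G₂ + ⟪u₂ - ((α + a₁) • z₂ - α • z₁), z₁ - z₂⟫ ≤ G₁)
    (hu : ‖u₂ - u₁‖ ≤ N * d) :
    ⟪z₂, u₂⟫ - G₂ + α * (1 / 2 + 2 * α / a₂) * ‖z₂ - z₁‖ ^ 2
        - (1 / 2 * a₀ + 2 * α * ((a₀ - a₁) / a₁)) * ‖z₂‖ ^ 2
        + (α - 2 * α ^ 2 / γ) * ‖z₂ - z₁‖ ^ 2 ≤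
      ⟪z₁, u₂⟫ - G₁ + α * (1 / 2 + 2 * α / a₁) * ‖z₁ - z₀‖ ^ 2
        - (1 / 2 * a₀ + 2 * α * ((a₀ - a₁) / a₁)) * ‖z₁‖ ^ 2
        + 3 * N ^ 2 * γ / (2 * a₁ ^ 2) * d ^ 2 := by
  -- The claim is `inner_sub_le_of_subgradient` plus `4 * α / a₁` times
  -- `norm_sq_le_of_subgradients`, with all inner products other than `⟪z₁, u₂⟫` and `⟪z₂, u₂⟫`
  -- replaced by squares.
  set t := ‖z₂ - z₁‖
  have hpolar : ⟪z₁, z₂ - z₁⟫ = (‖z₂‖ ^ 2 - ‖z₁‖ ^ 2 - t ^ 2) / 2 := by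
    have h := norm_add_sq_real z₁ (z₂ - z₁)
    rw [add_sub_cancel] at h
    linarith
  have hinertia : (α + 4 * α ^ 2 / a₁) * ⟪z₁ - z₀, z₂ - z₁⟫ ≤
      (α + 4 * α ^ 2 / a₁) * ((‖z₁ - z₀‖ ^ 2 + t ^ 2) / 2) := by
    gcongr
    linarith [norm_sub_sq_real (z₁ - z₀) (z₂ - z₁), sq_nonneg ‖z₁ - z₀ - (z₂ - z₁)‖]
  have hcoupling : (1 + 4 * α / a₁) * ⟪u₂ - u₁, z₂ - z₁⟫ ≤
      3 * N ^ 2 * γ / (2 * a₁ ^ 2) * d ^ 2 + (2 * α + a₁ / 2) * t ^ 2 := by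
    refine le_trans ?_ (coupling_le hα.le ha₁ (by linarith) t)
    gcongr
    exact (real_inner_le_norm _ _).trans (by gcongr)
  have hweight : 2 * α ^ 2 * a₂⁻¹ * t ^ 2 ≤ 2 * α ^ 2 * (a₁⁻¹ + γ⁻¹) * t ^ 2 := by gcongr
  have hdrop : 0 ≤ (a₀ - a₁) * (1 / 2 + 2 * α / a₁) * t ^ 2 := by
    have := sub_nonneg.2 ha₁₀
    positivity
  have hdecrease := inner_sub_le_of_subgradient (u₂ := u₂) h₁
  have hmono := mul_le_mul_of_nonneg_left (norm_sq_le_of_subgradients h₁ h₂)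
    (by positivity : 0 ≤ 4 * α / a₁)
  rw [hpolar] at hdecrease hmono
  have hcancel : 4 * α / a₁ * ((α + a₁) * t ^ 2) = 4 * α ^ 2 / a₁ * t ^ 2 + 4 * α * t ^ 2 := by
    field_simp
  rw [hcancel] at hmono
  simp only [div_eq_mul_inv _ a₁, div_eq_mul_inv _ a₂, div_eq_mul_inv _ γ]
    at hdrop hinertia hcoupling hmono hdecrease ⊢
  linarith

end DualStep

section Algorithm

variable {X Y Z : Type*} [NormedAddCommGroup X] [InnerProductSpace ℝ X] [CompleteSpace X]
  [NormedAddCommGroup Y] [InnerProductSpace ℝ Y] [CompleteSpace Y]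
  [NormedAddCommGroup Z] [InnerProductSpace ℝ Z] [CompleteSpace Z]

/-- The DPFS iteration for minimizing `g ∘ A + φ - f ∘ K` over `S`, phrased through `G = g*`,
`H = f*` and the gradient `gφ` of `φ`: a projected gradient step in `x`, then proximal steps for `H`
at `y` and for `G` at the damped point `δ • z`. -/
structure IsDPFS (S : Set X) (gφ : X → X) (A : X →L[ℝ] Z) (K : X →L[ℝ] Y) (G : Z → EReal)
    (H : Y → EReal) (α β ρ δ : ℕ → ℝ) (x : ℕ → X) (y : ℕ → Y) (z : ℕ → Z) : Prop where
  mem : ∀ k, x k ∈ S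
  proj_x : ∀ k, ∀ v ∈ S,
    ‖x (k + 1) - (x k - (ρ k)⁻¹ • (A.adjoint (z k) - K.adjoint (y k) + gφ (x k)))‖ ≤
      ‖v - (x k - (ρ k)⁻¹ • (A.adjoint (z k) - K.adjoint (y k) + gφ (x k)))‖
  prox_y : ∀ k w,
    H (y (k + 1)) +
        ((-⟪K (x (k + 1)), y (k + 1)⟫ + β k / 2 * ‖y (k + 1) - y k‖ ^ 2 : ℝ) : EReal) ≤
      H w + ((-⟪K (x (k + 1)), w⟫ + β k / 2 * ‖w - y k‖ ^ 2 : ℝ) : EReal)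
  prox_z : ∀ k w,
    G (z (k + 1)) +
        ((-⟪A (x (k + 1)), z (k + 1)⟫ + α k / 2 * ‖z (k + 1) - δ k • z k‖ ^ 2 : ℝ) : EReal) ≤
      G w + ((-⟪A (x (k + 1)), w⟫ + α k / 2 * ‖w - δ k • z k‖ ^ 2 : ℝ) : EReal)

/-- The real value of the function `Ψ` of the paper; meaningful where `G` and `H` are finite. -/
noncomputable def saddleValue (φ : X → ℝ) (A : X →L[ℝ] Z) (K : X →L[ℝ] Y) (G : Z → EReal)
    (H : Y → EReal) (u : X) (v : Y) (w : Z) : ℝ :=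
  ⟪w, A u⟫ - (G w).toReal + (φ u - ⟪K u, v⟫) + (H v).toReal

/-- The energy `ψ (k + 2)` of the paper, for the saddle function `Ψ`; the shift avoids truncated
subtraction of indices. -/
noncomputable def energy (Ψ : X → Y → Z → ℝ) (αl : ℝ) (α : ℕ → ℝ) (x : ℕ → X) (y : ℕ → Y)
    (z : ℕ → Z) (k : ℕ) : ℝ :=
  Ψ (x (k + 2)) (y (k + 2)) (z (k + 2)) +
    (αl * (1 / 2 + 2 * αl / (α (k + 2) - αl)) * ‖z (k + 2) - z (k + 1)‖ ^ 2 -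
      energyWeight αl α k * ‖z (k + 2)‖ ^ 2)

lemma toReal_add_le_of_add_coe_le {a b : EReal} {r t : ℝ} (ha : a ≠ ⊥) (hb : b ≠ ⊤)
    (h : a + r ≤ b + t) : a ≠ ⊤ ∧ a.toReal + r ≤ b.toReal + t := by
  have hb' : b ≠ ⊥ := by
    rintro rfl
    rw [EReal.bot_add, le_bot_iff, EReal.add_eq_bot_iff] at h
    exact h.elim ha (EReal.coe_ne_bot r)
  have ha' : a ≠ ⊤ := by
    rintro rfl
    rw [EReal.top_add_coe, top_le_iff] at h
    exact EReal.add_ne_top hb (EReal.coe_ne_top t) h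
  refine ⟨ha', ?_⟩
  rw [← EReal.coe_toReal ha' ha, ← EReal.coe_toReal hb hb'] at h
  exact_mod_cast h

namespace IsDPFS

variable {S : Set X} {φ : X → ℝ} {gφ : X → X} {ℓ : ℝ} {A : X →L[ℝ] Z} {K : X →L[ℝ] Y}
  {G : Z → EReal} {H : Y → EReal} {αl γ μ βlo : ℝ} {α β ρ δ : ℕ → ℝ} {x : ℕ → X} {y : ℕ → Y}
  {z : ℕ → Z}

lemma G_ne_top (h : IsDPFS S gφ A K G H α β ρ δ x y z) (hG : IsProper G) (k : ℕ) :
    G (z (k + 1)) ≠ ⊤ := by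
  obtain ⟨w, hw⟩ := hG.exists_ne_top
  exact (toReal_add_le_of_add_coe_le (hG.ne_bot _) hw (h.prox_z k w)).1

lemma H_ne_top (h : IsDPFS S gφ A K G H α β ρ δ x y z) (hH : IsProper H) (k : ℕ) :
    H (y (k + 1)) ≠ ⊤ := by
  obtain ⟨w, hw⟩ := hH.exists_ne_top
  exact (toReal_add_le_of_add_coe_le (hH.ne_bot _) hw (h.prox_y k w)).1

lemma z_subgradient (h : IsDPFS S gφ A K G H α β ρ δ x y z) (hα : IsStepSize αl γ α)
    (hδ : ∀ k, δ k = αl / α k) (hG : IsProper G) (hGconv : Convex ℝ (realEpigraph G)) (k : ℕ)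
    {w : Z} {b : ℝ} (hw : G w ≤ b) :
    (G (z (k + 1))).toReal +
      ⟪A (x (k + 1)) - (α k • z (k + 1) - αl • z k), w - z (k + 1)⟫ ≤ b := by
  have hprox := toReal_add_inner_le_of_prox hGconv (h.G_ne_top hG k) (hG.ne_bot _) (h.prox_z k) hw
  rwa [smul_sub, smul_smul, hδ, mul_div_cancel₀ _ (hα.pos.trans (hα.lt k)).ne'] at hprox

lemma y_step (h : IsDPFS S gφ A K G H α β ρ δ x y z) (hβ : ∀ k, βlo ≤ β k)
    (hH : IsProper H) (k : ℕ) (hytop : H (y k) ≠ ⊤) :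
    (H (y (k + 1))).toReal - ⟪K (x (k + 1)), y (k + 1)⟫ + βlo / 2 * ‖y k - y (k + 1)‖ ^ 2 ≤
      (H (y k)).toReal - ⟪K (x (k + 1)), y k⟫ := by
  have hprox := (toReal_add_le_of_add_coe_le (hH.ne_bot _) hytop (h.prox_y k (y k))).2
  rw [sub_self, norm_zero, norm_sub_rev] at hprox
  have hcoeff : βlo / 2 * ‖y k - y (k + 1)‖ ^ 2 ≤ β k / 2 * ‖y k - y (k + 1)‖ ^ 2 := by
    gcongr
    exact hβ k
  linarith

lemma x_step (h : IsDPFS S gφ A K G H α β ρ δ x y z) (hα : IsStepSize αl γ α) (hμ : 0 < μ)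
    (hρ : ∀ k, ρ k = ℓ / 2 + 3 * ‖A‖ ^ 2 * γ / (2 * (α k - αl) ^ 2) + μ) (hS : Convex ℝ S)
    (hφ : ∀ u ∈ S, HasGradientWithinAt φ (gφ u) S u)
    (hlip : ∀ u ∈ S, ∀ v ∈ S, ‖gφ u - gφ v‖ ≤ ℓ * ‖u - v‖) (k : ℕ) :
    ⟪z k, A (x (k + 1))⟫ + (φ (x (k + 1)) - ⟪K (x (k + 1)), y k⟫) +
        (3 * ‖A‖ ^ 2 * γ / (2 * (α k - αl) ^ 2) + μ) * ‖x k - x (k + 1)‖ ^ 2 ≤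
      ⟪z k, A (x k)⟫ + (φ (x k) - ⟪K (x k), y k⟫) := by
  have hγ : 0 < γ := (hα.sub_pos 0).trans_le (hα.sub_le 0)
  have hτ : 0 < 3 * ‖A‖ ^ 2 * γ / (2 * (α k - αl) ^ 2) + μ := by positivity
  have hproj := h.proj_x k
  rw [hρ, add_assoc] at hproj
  have hdecrease := sufficient_decrease_of_projected_gradient hS hφ hlip hτ (h.mem k)
    (h.mem (k + 1)) hproj
  simp only [inner_sub_left, ContinuousLinearMap.adjoint_inner_left,
    real_inner_comm (K _)] at hdecrease
  linarith

lemma energy_step (h : IsDPFS S gφ A K G H α β ρ δ x y z) (hα : IsStepSize αl γ α)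
    (hδ : ∀ k, δ k = αl / α k) (hβ : ∀ k, βlo ≤ β k) (hμ : 0 < μ)
    (hρ : ∀ k, ρ k = ℓ / 2 + 3 * ‖A‖ ^ 2 * γ / (2 * (α k - αl) ^ 2) + μ) (hS : Convex ℝ S)
    (hφ : ∀ u ∈ S, HasGradientWithinAt φ (gφ u) S u)
    (hlip : ∀ u ∈ S, ∀ v ∈ S, ‖gφ u - gφ v‖ ≤ ℓ * ‖u - v‖) (hG : IsProper G)
    (hGconv : Convex ℝ (realEpigraph G)) (hH : IsProper H)
    {C : ℝ} (hC : ∀ k, ‖z k‖ ≤ C) (k : ℕ) :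
    energy (saddleValue φ A K G H) αl α x y z (k + 1) + C ^ 2 * energyWeight αl α (k + 1) +
        (μ * ‖x (k + 2) - x (k + 3)‖ ^ 2 + βlo / 2 * ‖y (k + 2) - y (k + 3)‖ ^ 2 +
          (αl - 2 * αl ^ 2 / γ) * ‖z (k + 2) - z (k + 3)‖ ^ 2) ≤
      energy (saddleValue φ A K G H) αl α x y z k + C ^ 2 * energyWeight αl α k := by
  have hu : ‖A (x (k + 3)) - A (x (k + 2))‖ ≤ ‖A‖ * ‖x (k + 2) - x (k + 3)‖ := by
    rw [← map_sub, norm_sub_rev (x (k + 2))]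
    exact A.le_opNorm _
  have hz : ∀ i j, (G (z (i + 1))).toReal + ⟪A (x (i + 1)) -
      ((αl + (α i - αl)) • z (i + 1) - αl • z i), z (j + 1) - z (i + 1)⟫ ≤
      (G (z (j + 1))).toReal := fun i j => by
    rw [add_sub_cancel]
    exact h.z_subgradient hα hδ hG hGconv i (EReal.le_coe_toReal (h.G_ne_top hG j))
  have hzstep := dual_energy_step hα.pos hα.lt_half (hα.sub_pos (k + 2))
    (sub_le_sub_right (hα.succ_le (k + 1)) αl) (hα.sub_le _) (hα.inv_sub_le (k + 2))
    (hz (k + 1) (k + 2)) (hz (k + 2) (k + 1)) hu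
  rw [sub_sub_sub_cancel_right] at hzstep
  have hystep := h.y_step hβ hH _ (h.H_ne_top hH (k + 1))
  have hxstep := h.x_step hα hμ hρ hS hφ hlip (k + 2)
  have hweight : (energyWeight αl α k - energyWeight αl α (k + 1)) * ‖z (k + 2)‖ ^ 2 ≤
      (energyWeight αl α k - energyWeight αl α (k + 1)) * C ^ 2 := by
    have := sub_nonneg.2 (hα.energyWeight_antitone k.le_succ)
    gcongr
    exact hC (k + 2)
  change _ - energyWeight αl α (k + 1) * _ + _ ≤ _ - energyWeight αl α (k + 1) * _ + _ at hzstep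
  simp only [energy, saddleValue, norm_sub_rev (z (k + 2)) (z (k + 3))]
  linarith

lemma exists_le_dual (h : IsDPFS S gφ A K G H α β ρ δ x y z) (hα : IsStepSize αl γ α)
    (hδ : ∀ k, δ k = αl / α k) (hG : IsProper G) (hGconv : Convex ℝ (realEpigraph G))
    (hAS : Bornology.IsBounded (A '' S)) {C : ℝ} (hC : ∀ k, ‖z k‖ ≤ C) :
    ∃ c : ℝ, ∀ k, c ≤ ⟪z (k + 1), A (x (k + 1))⟫ - (G (z (k + 1))).toReal := by
  obtain ⟨B, hB⟩ := hAS.exists_norm_le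
  obtain ⟨w, hw⟩ := hG.exists_ne_top
  refine ⟨-(‖w‖ * B) - (α 0 * C + αl * C) * (‖w‖ + C) - (G w).toReal, fun k => ?_⟩
  have hαk : 0 ≤ α k := (hα.pos.trans (hα.lt k)).le
  have hα0 : α k ≤ α 0 := hα.antitone k.zero_le
  have hpos := hα.pos.le
  have hq : ‖α k • z (k + 1) - αl • z k‖ ≤ α 0 * C + αl * C := by
    refine (norm_sub_le _ _).trans ?_
    rw [norm_smul, norm_smul, Real.norm_of_nonneg hαk, Real.norm_of_nonneg hpos]
    gcongr
    exacts [hαk.trans hα0, hC _, hC _]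
  have hinertia : ⟪α k • z (k + 1) - αl • z k, w - z (k + 1)⟫ ≤ (α 0 * C + αl * C) * (‖w‖ + C) :=
    (real_inner_le_norm _ _).trans <|
      mul_le_mul hq ((norm_sub_le _ _).trans (by gcongr; exact hC _)) (norm_nonneg _)
        ((norm_nonneg _).trans hq)
  have hAw : -(‖w‖ * B) ≤ ⟪A (x (k + 1)), w⟫ := by
    have := hB _ (Set.mem_image_of_mem A (h.mem (k + 1)))
    rw [real_inner_comm]
    exact (abs_le.1 ((abs_real_inner_le_norm _ _).trans (by gcongr))).1
  have hsub := h.z_subgradient hα hδ hG hGconv k (EReal.le_coe_toReal hw)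
  rw [inner_sub_left, inner_sub_right (A _), real_inner_comm (z (k + 1))] at hsub
  linarith

lemma exists_le_energy (h : IsDPFS S gφ A K G H α β ρ δ x y z) (hα : IsStepSize αl γ α)
    (hδ : ∀ k, δ k = αl / α k) (hG : IsProper G) (hGconv : Convex ℝ (realEpigraph G))
    (hH : IsProper H) (hAS : Bornology.IsBounded (A '' S)) {m : ℝ}
    (hm : ∀ u ∈ S, ∀ w, (m : EReal) ≤ ((φ u - ⟪K u, w⟫ : ℝ) : EReal) + H w)
    {C : ℝ} (hC : ∀ k, ‖z k‖ ≤ C) :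
    ∃ c : ℝ, ∀ k, c ≤ energy (saddleValue φ A K G H) αl α x y z k := by
  obtain ⟨c, hc⟩ := h.exists_le_dual hα hδ hG hGconv hAS hC
  refine ⟨c + m - energyWeight αl α 0 * C ^ 2, fun k => ?_⟩
  have hprimal : m ≤ φ (x (k + 2)) - ⟪K (x (k + 2)), y (k + 2)⟫ + (H (y (k + 2))).toReal := by
    have := hm _ (h.mem (k + 2)) (y (k + 2))
    rw [← EReal.coe_toReal (h.H_ne_top hH (k + 1)) (hH.ne_bot _)] at this
    exact_mod_cast this
  have hinertia :
      0 ≤ αl * (1 / 2 + 2 * αl / (α (k + 2) - αl)) * ‖z (k + 2) - z (k + 1)‖ ^ 2 := by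
    have := hα.pos
    have := hα.sub_pos (k + 2)
    positivity
  have hweight : energyWeight αl α k * ‖z (k + 2)‖ ^ 2 ≤ energyWeight αl α 0 * C ^ 2 := by
    have := hα.energyWeight_nonneg 0
    gcongr
    exacts [hα.energyWeight_antitone k.zero_le, hC _]
  unfold energy saddleValue
  linarith [hc (k + 1)]

lemma eq_coe_energy (h : IsDPFS S gφ A K G H α β ρ δ x y z)
    (hG : IsProper G) (hH : IsProper H) {ψ : ℕ → EReal} (hψ : ∀ k, 2 ≤ k → ψ k =
      ((⟪z k, A (x k)⟫ : ℝ) : EReal) - G (z k) + ((φ (x k) - ⟪K (x k), y k⟫ : ℝ) : EReal) +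
        H (y k) + ((αl * (1 / 2 + 2 * αl / (α k - αl)) * ‖z k - z (k - 1)‖ ^ 2 -
        ((1 / 2) * (α (k - 2) - αl) - 2 * αl * (α (k - 1) - α (k - 2)) / (α (k - 1) - αl)) *
          ‖z k‖ ^ 2 : ℝ) : EReal)) (k : ℕ) :
    ψ (k + 2) = (energy (saddleValue φ A K G H) αl α x y z k : EReal) := by
  have hweight : energyWeight αl α k =
      1 / 2 * (α k - αl) - 2 * αl * (α (k + 1) - α k) / (α (k + 1) - αl) := by
    unfold energyWeight
    ring
  rw [hψ (k + 2) (Nat.le_add_left _ _), ← EReal.coe_toReal (h.G_ne_top hG _) (hG.ne_bot _),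
    ← EReal.coe_toReal (h.H_ne_top hH _) (hH.ne_bot _), energy, hweight]
  rfl

end IsDPFS

end Algorithm

theorem stmt_4_general {X Y Z : Type*} [NormedAddCommGroup X] [InnerProductSpace ℝ X]
    [CompleteSpace X] [NormedAddCommGroup Y] [InnerProductSpace ℝ Y] [CompleteSpace Y]
    [NormedAddCommGroup Z] [InnerProductSpace ℝ Z] [CompleteSpace Z] {S : Set X} {φ : X → ℝ}
    {gφ : X → X} {ℓ : ℝ} {A : X →L[ℝ] Z} {K : X →L[ℝ] Y} {G : Z → EReal} {H : Y → EReal}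
    {αl γ μ βlo : ℝ} {α β ρ δ : ℕ → ℝ} {x : ℕ → X} {y : ℕ → Y} {z : ℕ → Z} {ψ : ℕ → EReal}
    (h : IsDPFS S gφ A K G H α β ρ δ x y z) (hS : Convex ℝ S)
    (hAS : Bornology.IsBounded (A '' S)) (hφ : ∀ u ∈ S, HasGradientWithinAt φ (gφ u) S u)
    (hlip : ∀ u ∈ S, ∀ v ∈ S, ‖gφ u - gφ v‖ ≤ ℓ * ‖u - v‖) (hG : IsProper G)
    (hGconv : Convex ℝ (realEpigraph G)) (hH : IsProper H)
    (hbelow : ∃ m : ℝ, ∀ u ∈ S, ∀ w, (m : EReal) ≤ ((φ u - ⟪K u, w⟫ : ℝ) : EReal) + H w)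
    (hα : IsStepSize αl γ α) (hδ : ∀ k, δ k = αl / α k) (hβlo : 0 < βlo) (hβ : ∀ k, βlo ≤ β k)
    (hμ : 0 < μ) (hρ : ∀ k, ρ k = ℓ / 2 + 3 * ‖A‖ ^ 2 * γ / (2 * (α k - αl) ^ 2) + μ)
    (hψ : ∀ k, 2 ≤ k → ψ k =
      ((⟪z k, A (x k)⟫ : ℝ) : EReal) - G (z k) + ((φ (x k) - ⟪K (x k), y k⟫ : ℝ) : EReal) +
        H (y k) + ((αl * (1 / 2 + 2 * αl / (α k - αl)) * ‖z k - z (k - 1)‖ ^ 2 -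
        ((1 / 2) * (α (k - 2) - αl) - 2 * αl * (α (k - 1) - α (k - 2)) / (α (k - 1) - αl)) *
          ‖z k‖ ^ 2 : ℝ) : EReal))
    (hzbdd : ∃ C : ℝ, ∀ k, ‖z k‖ ≤ C) :
    (∃ mlb : ℝ, ∀ k, 2 ≤ k → (mlb : EReal) ≤ ψ k) ∧
    (∃ L : ℝ, Tendsto ψ atTop (nhds (L : EReal))) ∧
    Tendsto (fun k => ‖x k - x (k + 1)‖) atTop (nhds 0) ∧
    Tendsto (fun k => ‖y k - y (k + 1)‖) atTop (nhds 0) ∧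
    Tendsto (fun k => ‖z k - z (k + 1)‖) atTop (nhds 0) := by
  obtain ⟨C, hC⟩ := hzbdd
  obtain ⟨m, hm⟩ := hbelow
  have hψE := h.eq_coe_energy hG hH hψ
  obtain ⟨c, hc⟩ := h.exists_le_energy hα hδ hG hGconv hH hAS hm hC
  obtain ⟨Lw, hLw⟩ := hα.exists_tendsto_energyWeight
  have hη := sub_pos.2 hα.two_mul_sq_div_lt
  obtain ⟨⟨L, hL⟩, hD⟩ := tendsto_of_dissipation
    (fun k => le_add_of_le_of_nonneg (hc k)
      (mul_nonneg (sq_nonneg C) (hα.energyWeight_nonneg k)))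
    (fun k => by positivity) (h.energy_step hα hδ hβ hμ hρ hS hφ hlip hG hGconv hH hC)
  obtain ⟨hx, hy, hz⟩ := tendsto_zero_of_add_mul_sq hμ (half_pos hβlo) hη
    (fun _ => norm_nonneg _) (fun _ => norm_nonneg _) (fun _ => norm_nonneg _) hD
  refine ⟨⟨c, fun k hk => ?_⟩, ⟨L - C ^ 2 * Lw, ?_⟩, (tendsto_add_atTop_iff_nat 2).1 hx,
    (tendsto_add_atTop_iff_nat 2).1 hy, (tendsto_add_atTop_iff_nat 2).1 hz⟩
  · obtain ⟨k, rfl⟩ := Nat.exists_eq_add_of_le' hk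
    rw [hψE]
    exact EReal.coe_le_coe_iff.2 (hc k)
  · rw [← tendsto_add_atTop_iff_nat 2]
    simp only [hψE, EReal.tendsto_coe]
    exact (hL.sub (hLw.const_mul (C ^ 2))).congr fun k => add_sub_cancel_right _ _

/-- (Theorem 4.2 of the paper.)  For the DPFS iteration with `G = g*`,
`H = f*`, `A(S) ⊆ ri(dom g)`, the objective bounded below on `S` by `F̲`, and the adaptive
step-size regime `α_k ↓ α`, `δ_k = α/α_k`, `β̲ ≤ β_k ≤ β̄`,
`ρ_k = ℓ/2 + 3σ_Aγ/(2(α_k − α)²) + μ`, if `(z^k)` is bounded then the energy `(ψ_k)_{k ≥ 2}`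
is bounded below and converges to a real limit, and the discrete velocities
`‖x^k − x^{k+1}‖`, `‖y^k − y^{k+1}‖`, `‖z^k − z^{k+1}‖` all tend to `0`. -/
theorem stmt_4 (n s p : ℕ)
    (S : Set (EuclideanSpace ℝ (Fin n)))
    (hSne : S.Nonempty) (hSconv : Convex ℝ S) (hScomp : IsCompact S)
    (φ : EuclideanSpace ℝ (Fin n) → ℝ)
    (gφ : EuclideanSpace ℝ (Fin n) → EuclideanSpace ℝ (Fin n))
    (ℓ : ℝ)
    (hφ : ∀ u, HasGradientAt φ (gφ u) u)
    (hφlip : ∀ u v, ‖gφ u - gφ v‖ ≤ ℓ * ‖u - v‖)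
    (A : EuclideanSpace ℝ (Fin n) →L[ℝ] EuclideanSpace ℝ (Fin s))
    (K : EuclideanSpace ℝ (Fin n) →L[ℝ] EuclideanSpace ℝ (Fin p))
    (g : EuclideanSpace ℝ (Fin s) → EReal)
    (hgproper₁ : ∀ v, g v ≠ ⊥) (hgproper₂ : ∃ v, g v ≠ ⊤)
    (hgconv : ∀ v w : EuclideanSpace ℝ (Fin s), ∀ a b : ℝ, 0 ≤ a → 0 ≤ b → a + b = 1 →
      g (a • v + b • w) ≤ (a : EReal) * g v + (b : EReal) * g w)
    (hglsc : LowerSemicontinuous g)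
    (f : EuclideanSpace ℝ (Fin p) → EReal)
    (hfproper₁ : ∀ v, f v ≠ ⊥) (hfproper₂ : ∃ v, f v ≠ ⊤)
    (hfconv : ∀ v w : EuclideanSpace ℝ (Fin p), ∀ a b : ℝ, 0 ≤ a → 0 ≤ b → a + b = 1 →
      f (a • v + b • w) ≤ (a : EReal) * f v + (b : EReal) * f w)
    (hflsc : LowerSemicontinuous f)
    -- `G = g*` and `H = f*` are the Fenchel conjugates
    (G : EuclideanSpace ℝ (Fin s) → EReal)
    (hG : ∀ w, G w = ⨆ v, ((⟪w, v⟫ : ℝ) : EReal) - g v)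
    (H : EuclideanSpace ℝ (Fin p) → EReal)
    (hH : ∀ w, H w = ⨆ v, ((⟪w, v⟫ : ℝ) : EReal) - f v)
    -- Assumption 3.1: `A(S) ⊆ ri (dom g)` and the objective is bounded below on `S`
    (hAS : A '' S ⊆ intrinsicInterior ℝ {v | g v ≠ ⊤})
    (Flb : ℝ)
    (hFlb : ∀ u ∈ S, f (K u) + (Flb : EReal) ≤ g (A u) + ((φ u : ℝ) : EReal))
    -- parameters
    (γ αl μ : ℝ) (hγ : 0 < γ) (hαl : 0 < αl) (hαlγ : αl < γ / 2) (hμ : 0 < μ)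
    (α β ρ δ : ℕ → ℝ)
    (hαtend : Tendsto α atTop (nhds αl))
    (hα0 : α 0 ≤ αl + γ)
    (hαmono : ∀ k, α (k + 1) ≤ α k) (hαgt : ∀ k, αl < α k)
    (hscalar2 : ∀ k, (α k - α (k + 1)) / ((α (k + 1) - αl) * (α k - αl)) ≤ 1 / γ ∧
      (α k - αl) * (α (k + 2) - αl) ≥ (α (k + 1) - αl) ^ 2)
    (βlo βhi : ℝ) (hβlo : 0 < βlo)
    (hβ : ∀ k, βlo ≤ β k ∧ β k ≤ βhi)
    (hδ : ∀ k, δ k = αl / α k)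
    (hρ : ∀ k, ρ k = ℓ / 2 + 3 * ‖A‖ ^ 2 * γ / (2 * (α k - αl) ^ 2) + μ)
    -- the iterates
    (x : ℕ → EuclideanSpace ℝ (Fin n))
    (y : ℕ → EuclideanSpace ℝ (Fin p))
    (z : ℕ → EuclideanSpace ℝ (Fin s))
    (hx0 : x 0 ∈ S)
    (hxS : ∀ k, x (k + 1) ∈ S)
    (hxmin : ∀ k, ∀ v ∈ S,
      ‖x (k + 1) - (x k - (ρ k)⁻¹ •
        (ContinuousLinearMap.adjoint A (z k) - ContinuousLinearMap.adjoint K (y k) + gφ (x k)))‖ ≤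
      ‖v - (x k - (ρ k)⁻¹ •
        (ContinuousLinearMap.adjoint A (z k) - ContinuousLinearMap.adjoint K (y k) + gφ (x k)))‖)
    (hymin : ∀ k, ∀ w : EuclideanSpace ℝ (Fin p),
      H (y (k + 1)) + ((-⟪K (x (k + 1)), y (k + 1)⟫ + β k / 2 * ‖y (k + 1) - y k‖ ^ 2 : ℝ) : EReal) ≤
      H w + ((-⟪K (x (k + 1)), w⟫ + β k / 2 * ‖w - y k‖ ^ 2 : ℝ) : EReal))
    (hzmin : ∀ k, ∀ w : EuclideanSpace ℝ (Fin s),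
      G (z (k + 1)) + ((-⟪A (x (k + 1)), z (k + 1)⟫ + α k / 2 * ‖z (k + 1) - δ k • z k‖ ^ 2 : ℝ) : EReal) ≤
      G w + ((-⟪A (x (k + 1)), w⟫ + α k / 2 * ‖w - δ k • z k‖ ^ 2 : ℝ) : EReal))
    -- the energy sequence
    (ψ : ℕ → EReal)
    (hψ : ∀ k, 2 ≤ k → ψ k =
      ((⟪z k, A (x k)⟫ : ℝ) : EReal) - G (z k) + ((φ (x k) - ⟪K (x k), y k⟫ : ℝ) : EReal) + H (y k) +
      ((αl * (1 / 2 + 2 * αl / (α k - αl)) * ‖z k - z (k - 1)‖ ^ 2 -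
        ((1 / 2) * (α (k - 2) - αl) - 2 * αl * (α (k - 1) - α (k - 2)) / (α (k - 1) - αl)) *
          ‖z k‖ ^ 2 : ℝ) : EReal))
    -- boundedness of the dual iterates
    (hzbdd : ∃ C : ℝ, ∀ k, ‖z k‖ ≤ C) :
    (∃ mlb : ℝ, ∀ k, 2 ≤ k → (mlb : EReal) ≤ ψ k) ∧
    (∃ L : ℝ, Tendsto (fun k => ψ k) atTop (nhds (L : EReal))) ∧
    Tendsto (fun k => ‖x k - x (k + 1)‖) atTop (nhds 0) ∧
    Tendsto (fun k => ‖y k - y (k + 1)‖) atTop (nhds 0) ∧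
    Tendsto (fun k => ‖z k - z (k + 1)‖) atTop (nhds 0) := by
  obtain rfl : G = fenchelConjugate g := funext hG
  obtain rfl : H = fenchelConjugate f := funext hH
  have hgepi := convex_realEpigraph hgconv
  have hg : IsProper g := ⟨hgproper₁, hgproper₂⟩
  have hf : IsProper f := ⟨hfproper₁, hfproper₂⟩
  have hAScomp := hScomp.image A.continuous
  obtain ⟨M, hM⟩ :=
    exists_forall_le_of_isCompact_subset_intrinsicInterior hgepi hgproper₁ hAScomp hAS
  have hxmem : ∀ k, x k ∈ S
    | 0 => hx0
    | k + 1 => hxS k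
  have hα : IsStepSize αl γ α :=
    ⟨hαl, hαlγ, hα0, hαmono, hαgt, fun k => (hscalar2 k).1, fun k => (hscalar2 k).2⟩
  exact stmt_4_general ⟨hxmem, hxmin, hymin, hzmin⟩ hSconv hAScomp.isBounded
    (fun u _ => (hφ u).hasFDerivAt.hasFDerivWithinAt) (fun u _ v _ => hφlip u v)
    (hg.fenchelConjugate hgepi (isClosed_realEpigraph hglsc)) convex_realEpigraph_fenchelConjugate
    (hf.fenchelConjugate (convex_realEpigraph hfconv) (isClosed_realEpigraph hflsc))
    ⟨Flb - M, fun u hu => coe_sub_le_add_fenchelConjugate (hFlb u hu) (hM _ ⟨u, hu, rfl⟩)⟩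
    hα hδ hβlo (fun k => (hβ k).1) hμ hρ hψ hzbdd
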